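/- Let A be a linear relation between X and Z and B a linear relation between X and Y. The following are equivalent: (i) there exists a linear relation C between Y and Z which is (the graph of) an operator such that A ⊆ C∘B; (ii) dom A ⊆ dom B and dim(mul B) ≥ dim(A(dom A ∩ ker B)) (as cardinals). -/

import Mathlib

/-!
Linear relations between vector spaces, following Popovici–Sebestyén,
"Factorizations of Linear Relations".

A linear relation between `X` and `Y` is a linear subspace of `X × Y`,
formalized as `Submodule 𝕂 (X × Y)`.
-/

universe u

namespace LinRel

variable {𝕂 : Type u} [Field 𝕂]
variable {X Y Z : Type u} [AddCommGroup X] [Module 𝕂 X]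
  [AddCommGroup Y] [Module 𝕂 Y] [AddCommGroup Z] [Module 𝕂 Z]

/-- The domain of a linear relation. -/
def dom (R : Submodule 𝕂 (X × Y)) : Submodule 𝕂 X :=
  R.map (LinearMap.fst 𝕂 X Y)

/-- The range of a linear relation. -/
def ran (R : Submodule 𝕂 (X × Y)) : Submodule 𝕂 Y :=
  R.map (LinearMap.snd 𝕂 X Y)

/-- The kernel of a linear relation: `{x | (x, 0) ∈ R}`. -/
def ker (R : Submodule 𝕂 (X × Y)) : Submodule 𝕂 X :=
  R.comap ((LinearMap.id : X →ₗ[𝕂] X).prod (0 : X →ₗ[𝕂] Y))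

/-- The multivalued part of a linear relation: `{y | (0, y) ∈ R}`. -/
def mul (R : Submodule 𝕂 (X × Y)) : Submodule 𝕂 Y :=
  R.comap ((0 : Y →ₗ[𝕂] X).prod (LinearMap.id : Y →ₗ[𝕂] Y))

/-- The inverse of a linear relation: `{(y, x) | (x, y) ∈ R}`. -/
def inv (R : Submodule 𝕂 (X × Y)) : Submodule 𝕂 (Y × X) :=
  R.map ((LinearMap.snd 𝕂 X Y).prod (LinearMap.fst 𝕂 X Y))

/-- The product (composition) of two linear relations:
`S ∘ R = {(x, z) | ∃ y, (x, y) ∈ R ∧ (y, z) ∈ S}`. -/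
def comp (S : Submodule 𝕂 (Y × Z)) (R : Submodule 𝕂 (X × Y)) : Submodule 𝕂 (X × Z) where
  carrier := {p | ∃ y, (p.1, y) ∈ R ∧ (y, p.2) ∈ S}
  add_mem' := by
    rintro ⟨a, c⟩ ⟨a', c'⟩ ⟨y, h1, h2⟩ ⟨y', h1', h2'⟩
    exact ⟨y + y', R.add_mem h1 h1', S.add_mem h2 h2'⟩
  zero_mem' := ⟨0, R.zero_mem, S.zero_mem⟩
  smul_mem' := by
    rintro c ⟨a, b⟩ ⟨y, h1, h2⟩
    exact ⟨c • y, R.smul_mem c h1, S.smul_mem c h2⟩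

/-- The image `R(X₀)` of a subspace `X₀` under a linear relation `R`. -/
def img (R : Submodule 𝕂 (X × Y)) (X₀ : Submodule 𝕂 X) : Submodule 𝕂 Y :=
  ran (R ⊓ X₀.prod ⊤)

/-- The preimage `R⁻¹(Y₀)` of a subspace `Y₀` under a linear relation `R`. -/
def preimg (R : Submodule 𝕂 (X × Y)) (Y₀ : Submodule 𝕂 Y) : Submodule 𝕂 X :=
  img (inv R) Y₀

end LinRel


open LinRel

variable {𝕂 : Type u} [Field 𝕂]
variable {X Y Z : Type u} [AddCommGroup X] [Module 𝕂 X]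
  [AddCommGroup Y] [Module 𝕂 Y] [AddCommGroup Z] [Module 𝕂 Z]

/-!
A linear selection `s : A → Y` with `(x, s (x, z)) ∈ B` for all `(x, z) ∈ A` gives the factor
`C = {(s (x, z), z) | (x, z) ∈ A}`, which is an operator as soon as `s (x, z) = 0` forces `z = 0`.
If `s (x, z) = 0` then `x ∈ ker B`, so only the pairs in `A` over `ker B` matter. Over `ker B` a
selection is any linear map into `mul B`: take `(x, z) ↦ i z` for an embedding `i` of `A (ker B)`
into `mul B`, and extend it to a selection on all of `A`. Conversely, `A ⊆ C ∘ B` gives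
`A (ker B) ⊆ C (B (ker B)) = C (mul B)`, and an operator does not increase dimension.
-/

namespace LinRel

section Membership

variable {R : Submodule 𝕂 (X × Y)} {x : X} {y : Y}

theorem mem_dom : x ∈ dom R ↔ ∃ y, (x, y) ∈ R := by
  simp [dom]

theorem mem_ker : x ∈ ker R ↔ (x, 0) ∈ R :=
  Iff.rfl

theorem mem_mul : y ∈ mul R ↔ (0, y) ∈ R :=
  Iff.rfl

theorem mem_comp {S : Submodule 𝕂 (Y × Z)} {z : Z} :
    (x, z) ∈ comp S R ↔ ∃ y, (x, y) ∈ R ∧ (y, z) ∈ S :=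
  Iff.rfl

theorem mem_img {X₀ : Submodule 𝕂 X} : y ∈ img R X₀ ↔ ∃ x ∈ X₀, (x, y) ∈ R := by
  simp [img, ran, and_comm]

end Membership

section Image

theorem dom_mono {R S : Submodule 𝕂 (X × Y)} (h : R ≤ S) : dom R ≤ dom S :=
  Submodule.map_mono h

theorem dom_comp_le (S : Submodule 𝕂 (Y × Z)) (R : Submodule 𝕂 (X × Y)) :
    dom (comp S R) ≤ dom R := by
  intro x hx
  obtain ⟨z, y, hxy, -⟩ := mem_dom.1 hx
  exact mem_dom.2 ⟨y, hxy⟩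

theorem img_mono {R S : Submodule 𝕂 (X × Y)} (h : R ≤ S) (X₀ : Submodule 𝕂 X) :
    img R X₀ ≤ img S X₀ :=
  Submodule.map_mono (inf_le_inf_right _ h)

theorem img_dom_inf (R : Submodule 𝕂 (X × Y)) (X₀ : Submodule 𝕂 X) :
    img R (dom R ⊓ X₀) = img R X₀ := by
  ext y
  simp only [mem_img, Submodule.mem_inf, mem_dom]
  exact ⟨fun ⟨x, ⟨_, hx⟩, hxy⟩ ↦ ⟨x, hx, hxy⟩, fun ⟨x, hx, hxy⟩ ↦ ⟨x, ⟨⟨y, hxy⟩, hx⟩, hxy⟩⟩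

theorem img_comp (S : Submodule 𝕂 (Y × Z)) (R : Submodule 𝕂 (X × Y)) (X₀ : Submodule 𝕂 X) :
    img (comp S R) X₀ = img S (img R X₀) := by
  ext z
  simp only [mem_img, mem_comp]
  exact ⟨fun ⟨x, hx, y, hxy, hyz⟩ ↦ ⟨y, ⟨x, hx, hxy⟩, hyz⟩,
    fun ⟨y, ⟨x, hx, hxy⟩, hyz⟩ ↦ ⟨x, hx, y, hxy, hyz⟩⟩

theorem mem_mul_iff_mem_of_mem_ker {R : Submodule 𝕂 (X × Y)} {x : X} {y : Y} (hx : x ∈ ker R) :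
    y ∈ mul R ↔ (x, y) ∈ R := by
  rw [mem_mul, ← R.add_mem_iff_right (mem_ker.1 hx), Prod.mk_add_mk, add_zero, zero_add]

theorem img_ker (R : Submodule 𝕂 (X × Y)) : img R (ker R) = mul R := by
  ext y
  rw [mem_img]
  exact ⟨fun ⟨_, hker, hxy⟩ ↦ (mem_mul_iff_mem_of_mem_ker hker).2 hxy,
    fun hy ↦ ⟨0, zero_mem _, hy⟩⟩

theorem rank_img_le {R : Submodule 𝕂 (X × Y)} (hR : mul R = ⊥) (X₀ : Submodule 𝕂 X) :
    Module.rank 𝕂 (img R X₀) ≤ Module.rank 𝕂 X₀ := by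
  let π : ↥(R ⊓ X₀.prod ⊤) →ₗ[𝕂] X₀ := (LinearMap.fst 𝕂 X Y).restrict fun _ hp ↦ hp.2.1
  have hπ : Function.Injective π := by
    refine (injective_iff_map_eq_zero π).2 ?_
    rintro ⟨⟨x, y⟩, hxy, _⟩ hx
    obtain rfl : x = 0 := congrArg Subtype.val hx
    obtain rfl : y = 0 := (Submodule.eq_bot_iff _).1 hR y hxy
    rfl
  exact (rank_map_le _ _).trans (LinearMap.rank_le_of_injective π hπ)

end Image

section Selection

variable {V : Type*} [AddCommGroup V] [Module 𝕂 V]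

theorem exists_selection {R : Submodule 𝕂 (X × Y)} {φ : V →ₗ[𝕂] X}
    (hφ : LinearMap.range φ ≤ dom R) : ∃ s : V →ₗ[𝕂] Y, ∀ v, (φ v, s v) ∈ R := by
  obtain ⟨l, hl⟩ := Module.projective_lifting_property ((LinearMap.fst 𝕂 X Y).submoduleMap R)
    (φ.codRestrict (dom R) fun v ↦ hφ ⟨v, rfl⟩) (LinearMap.submoduleMap_surjective _ R)
  refine ⟨LinearMap.snd 𝕂 X Y ∘ₗ R.subtype ∘ₗ l, fun v ↦ ?_⟩
  have hfst : (l v).1.1 = φ v := congrArg Subtype.val (LinearMap.congr_fun hl v)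
  rw [← hfst]
  exact (l v).2

theorem exists_selection_extend {R : Submodule 𝕂 (X × Y)} {φ : V →ₗ[𝕂] X}
    (hφ : LinearMap.range φ ≤ dom R) {K : Submodule 𝕂 V} {t : K →ₗ[𝕂] Y}
    (ht : ∀ k : K, (φ k, t k) ∈ R) :
    ∃ s : V →ₗ[𝕂] Y, (∀ v, (φ v, s v) ∈ R) ∧ ∀ k : K, s k = t k := by
  obtain ⟨s₀, hs₀⟩ := exists_selection hφ
  obtain ⟨q, hq⟩ := K.subtype.exists_leftInverse_of_injective K.ker_subtype
  refine ⟨t ∘ₗ q + s₀ ∘ₗ (LinearMap.id - K.subtype ∘ₗ q), fun v ↦ ?_, fun k ↦ ?_⟩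
  · simpa using R.add_mem (ht (q v)) (hs₀ (v - q v))
  · have hqk : q k = k := LinearMap.congr_fun hq k
    simp [hqk]

theorem mul_range_prod_eq_bot {s : V →ₗ[𝕂] Y} {ζ : V →ₗ[𝕂] Z}
    (h : LinearMap.ker s ≤ LinearMap.ker ζ) : mul (LinearMap.range (s.prod ζ)) = ⊥ := by
  refine (Submodule.eq_bot_iff _).2 ?_
  rintro z ⟨v, hv⟩
  obtain ⟨hs, rfl⟩ := Prod.mk.inj hv
  exact h hs

theorem le_comp_range_prod {A : Submodule 𝕂 (X × Z)} {B : Submodule 𝕂 (X × Y)}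
    {s : A →ₗ[𝕂] Y} (hs : ∀ p : A, (p.1.1, s p) ∈ B) :
    A ≤ comp (LinearMap.range (s.prod (LinearMap.snd 𝕂 X Z ∘ₗ A.subtype))) B :=
  fun p hp ↦ ⟨s ⟨p, hp⟩, hs ⟨p, hp⟩, ⟨p, hp⟩, rfl⟩

theorem exists_selection_ker_le {A : Submodule 𝕂 (X × Z)} {B : Submodule 𝕂 (X × Y)}
    (hdom : dom A ≤ dom B)
    (hrank : Module.rank 𝕂 (img A (ker B)) ≤ Module.rank 𝕂 (mul B)) :
    ∃ s : A →ₗ[𝕂] Y, (∀ p : A, (p.1.1, s p) ∈ B) ∧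
      LinearMap.ker s ≤ LinearMap.ker (LinearMap.snd 𝕂 X Z ∘ₗ A.subtype) := by
  obtain ⟨i, hi⟩ := rank_le_iff_exists_linearMap.1 hrank
  let φ : A →ₗ[𝕂] X := LinearMap.fst 𝕂 X Z ∘ₗ A.subtype
  let ζ : A →ₗ[𝕂] Z := LinearMap.snd 𝕂 X Z ∘ₗ A.subtype
  let K : Submodule 𝕂 A := (ker B).comap φ
  let ζK : K →ₗ[𝕂] img A (ker B) := ζ.restrict fun p hp ↦ mem_img.2 ⟨p.1.1, hp, p.2⟩
  have hφ : LinearMap.range φ ≤ dom B := by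
    rintro _ ⟨p, rfl⟩
    exact hdom (mem_dom.2 ⟨p.1.2, p.2⟩)
  obtain ⟨s, hs, hsK⟩ := exists_selection_extend hφ (t := (mul B).subtype ∘ₗ i ∘ₗ ζK)
    fun k ↦ (mem_mul_iff_mem_of_mem_ker k.2).1 (i (ζK k)).2
  refine ⟨s, hs, fun p hp ↦ ?_⟩
  have hpK : p ∈ K := mem_ker.2 (LinearMap.mem_ker.1 hp ▸ hs p)
  have hip : i (ζK ⟨p, hpK⟩) = 0 := Subtype.ext ((hsK ⟨p, hpK⟩).symm.trans hp)
  exact congrArg Subtype.val ((map_eq_zero_iff i hi).1 hip)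

end Selection

end LinRel

/-- Theorem 5.8: there exists an operator `C` with `A ⊆ CB` iff
`dom A ⊆ dom B` and `dim (mul B) ≥ dim A(dom A ∩ ker B)`. -/
theorem statement_17 (A : Submodule 𝕂 (X × Z)) (B : Submodule 𝕂 (X × Y)) :
    (∃ C : Submodule 𝕂 (Y × Z), mul C = ⊥ ∧ A ≤ comp C B) ↔
      (dom A ≤ dom B ∧
        Module.rank 𝕂 (img A (dom A ⊓ ker B)) ≤ Module.rank 𝕂 (mul B)) := by
  rw [img_dom_inf]
  constructor
  · rintro ⟨C, hC, hA⟩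
    refine ⟨(dom_mono hA).trans (dom_comp_le C B), ?_⟩
    have himg : img A (ker B) ≤ img C (mul B) := by
      simpa only [img_comp, img_ker] using img_mono hA (ker B)
    exact (Submodule.rank_mono himg).trans (rank_img_le hC (mul B))
  · rintro ⟨hdom, hrank⟩
    obtain ⟨s, hs, hker⟩ := exists_selection_ker_le hdom hrank
    exact ⟨_, mul_range_prod_eq_bot hker, le_comp_range_prod hs⟩
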